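/- arXiv:1906.06860 — 2 statements merged into one kernel-verified Lean document; each statement's English description precedes it below -/
import Mathlib

section
/- Let $V\in\mathbb{Q}[[X,E]]$ be the unique solution with zero constant term of the difference equation $\sum_{0\le\alpha_1\le\cdots\le\alpha_m\le n}\exp\big(\sum_{j=1}^{m}S_{\alpha_j m-(j-1/2)n}(V)\big)=\binom{m+n}{m}\,(1+X)$. Then: (i) $V$ contains only even powers of $E$ (the coefficient of $E^{2g+1}$ vanishes for every $g\ge0$); (ii) the specialization of $V$ at $E=0$ equals $\frac1m\log(1+X)$, the formal power series logarithm; and (iii) for every $g\ge1$ there exists a rational number $P_g(m,n)$ such that the coefficient of $E^{2g}$ in $V$, an element of $\mathbb{Q}[[X]]$, equals $P_g(m,n)\,(1+X)^{-2g}$. That is, $V$ has the form $V=\frac1m\log x+\sum_{g\ge1}\epsilon^{2g}\,P_g(m,n)\,x^{-2g}$ with $x=1+X$. -/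
/-!
The Euler derivation `x ∂/∂x + ε ∂/∂ε` commutes with every shift `x ↦ x + cε` and fixes the
right-hand side `binom(m+n, m) x`, so applying it to the equation shows that `x V_x + ε V_ε - 1/m`
solves the linearised equation. The latter has only the zero solution: to lowest order in `ε` each
shift is the identity and the linearised operator is multiplication by a unit. Hence
`x V_x + ε V_ε = 1/m`, and comparing powers of `ε`, the coefficient `f` of `ε ^ k` satisfies
`x f' + k f = 0` for `k > 0` and `x f' = 1/m` for `k = 0`.

The same injectivity makes the solution unique. Since `α_j ↦ n - α_{m+1-j}` permutes the index
tuples and negates their shifts, `ε ↦ -ε` maps solutions to solutions, so `V` is even in `ε`.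
-/

open MvPowerSeries

/-- The formal exponential of a multivariate power series (with zero constant term),
`fexp V = ∑_{n≥0} V^n / n!`, defined coefficientwise. -/
noncomputable def fexp (V : MvPowerSeries (Fin 2) ℚ) : MvPowerSeries (Fin 2) ℚ :=
  fun d => ∑ n ∈ Finset.range (d 0 + d 1 + 1),
    (Nat.factorial n : ℚ)⁻¹ * MvPowerSeries.coeff d (V ^ n)

/-- The shift `S_c : x ↦ x + cε`, i.e. the continuous `ℚ`-algebra endomorphism of
`ℚ[[X,E]]` with `S_c(X) = X + c·E` and `S_c(E) = E`, described coefficientwise. -/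
noncomputable def shiftS (c : ℚ) (V : MvPowerSeries (Fin 2) ℚ) : MvPowerSeries (Fin 2) ℚ :=
  fun d => ∑ t ∈ Finset.range (d 1 + 1),
    (Nat.choose (d 0 + t) t : ℚ) * c ^ t *
      MvPowerSeries.coeff (Finsupp.single 0 (d 0 + t) + Finsupp.single 1 (d 1 - t)) V

/-- The difference equation
`∑_{0 ≤ α_1 ≤ ⋯ ≤ α_m ≤ n} exp(∑_{j=1}^m S_{α_j m - (j-1/2) n}(V)) = C(m+n,m)·(1+X)`. -/
def diffEq (m n : ℕ) (V : MvPowerSeries (Fin 2) ℚ) : Prop :=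
  ∑ α ∈ Finset.univ.filter
      (fun α : Fin m → Fin (n + 1) => ∀ i j : Fin m, i ≤ j → α i ≤ α j),
    fexp (∑ j : Fin m, shiftS ((α j : ℚ) * m - (((j : ℕ) : ℚ) + 1 / 2) * n) V)
  = (Nat.choose (m + n) m : MvPowerSeries (Fin 2) ℚ) * (1 + MvPowerSeries.X 0)

/-- The formal power series `log(1+X) = ∑_{i≥1} (-1)^{i+1} X^i / i` in `ℚ[[X]]`. -/
noncomputable def logOneAdd : PowerSeries ℚ :=
  PowerSeries.mk fun i => if i = 0 then 0 else (-1) ^ (i + 1) / (i : ℚ)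

open Finset.HasAntidiagonal (antidiagonal mem_antidiagonal)
open scoped PowerSeries

section Substitution

variable {σ R : Type*} [CommRing R] {a : MvPowerSeries σ R}

theorem eq_zero_of_forall_pow_dvd (ha : constantCoeff a = 0) {f : MvPowerSeries σ R}
    (h : ∀ N, a ^ N ∣ f) : f = 0 := by
  ext d
  obtain ⟨g, rfl⟩ := h (d.degree + 1)
  refine coeff_of_lt_order ?_
  calc (d.degree : ℕ∞) < (d.degree + 1 : ℕ) := by exact_mod_cast d.degree.lt_succ_self
    _ ≤ order (a ^ (d.degree + 1)) := le_order_pow_of_constantCoeff_eq_zero _ ha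
    _ ≤ order (a ^ (d.degree + 1) * g) := le_self_add.trans le_order_mul

/-- The defect `Δ f = D (f(a)) - f'(a) * D a` satisfies `Δ (X * g + r) = a * Δ g`, hence it is
divisible by every power of `a`. -/
theorem derivation_subst (D : Derivation R (MvPowerSeries σ R) (MvPowerSeries σ R))
    (ha : constantCoeff a = 0) (f : R⟦X⟧) :
    D (f.subst a) = (d⁄dX R f).subst a * D a := by
  have hs := PowerSeries.HasSubst.of_constantCoeff_zero ha
  have dvd_defect (N : ℕ) :
      ∀ f : R⟦X⟧, a ^ N ∣ D (f.subst a) - (d⁄dX R f).subst a * D a := by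
    induction N with
    | zero => simp
    | succ N ih =>
      intro f
      obtain ⟨r, g, rfl⟩ : ∃ r g, f = PowerSeries.X * g + PowerSeries.C r :=
        ⟨_, _, f.eq_X_mul_shift_add_const⟩
      rw [pow_succ']
      convert! mul_dvd_mul_left a (ih g) using 1
      have hC : D (C r) = 0 := D.map_algebraMap r
      simp only [PowerSeries.subst_add hs, PowerSeries.subst_mul hs, PowerSeries.subst_X hs,
        PowerSeries.subst_C, map_add, Derivation.leibniz, smul_eq_mul, hC, mul_one, add_zero,
        PowerSeries.derivative_X, PowerSeries.derivative_C]
      ring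
  exact sub_eq_zero.mp <| eq_zero_of_forall_pow_dvd ha fun N => dvd_defect N f

theorem constantCoeff_subst_of_constantCoeff_eq_zero (ha : constantCoeff a = 0) (f : R⟦X⟧) :
    constantCoeff (f.subst a) = PowerSeries.constantCoeff f := by
  have hs := PowerSeries.HasSubst.of_constantCoeff_zero ha
  conv_lhs => rw [f.eq_X_mul_shift_add_const]
  rw [PowerSeries.subst_add hs, PowerSeries.subst_mul hs, PowerSeries.subst_X hs,
    PowerSeries.subst_C, map_add, map_mul, ha, zero_mul, zero_add, constantCoeff_C]

theorem rescale_subst (b : σ → R) (ha : constantCoeff a = 0) (f : R⟦X⟧) :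
    rescale b (f.subst a) = f.subst (rescale b a) := by
  rw [rescale_eq_subst, rescale_eq_subst, PowerSeries.subst, PowerSeries.subst,
    subst_comp_subst_apply (PowerSeries.HasSubst.of_constantCoeff_zero ha).const
      (HasSubst.smul_X b)]

end Substitution

section Exponential

variable {A B : MvPowerSeries (Fin 2) ℚ}

theorem constantCoeff_fexp (A : MvPowerSeries (Fin 2) ℚ) : constantCoeff (fexp A) = 1 := by
  rw [← coeff_zero_eq_constantCoeff_apply, coeff_apply]
  simp [fexp]

theorem fexp_eq_subst_exp (hA : constantCoeff A = 0) :
    fexp A = (PowerSeries.exp ℚ).subst A := by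
  ext d
  have coeff_pow_eq_zero {n : ℕ} (hn : d 0 + d 1 < n) : coeff d (A ^ n) = 0 := by
    refine coeff_of_lt_order (lt_of_lt_of_le ?_ (le_order_pow_of_constantCoeff_eq_zero n hA))
    rw [Finsupp.degree_eq_sum, Fin.sum_univ_two]
    exact_mod_cast hn
  rw [PowerSeries.coeff_subst (.of_constantCoeff_zero hA),
    finsum_eq_sum_of_support_subset (s := Finset.range (d 0 + d 1 + 1))]
  · simp [coeff_apply, fexp]
  · intro n hn
    by_contra hlt
    exact hn (smul_eq_zero_of_right _ (coeff_pow_eq_zero (by simpa using hlt)))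

theorem derivation_fexp (D : Derivation ℚ (MvPowerSeries (Fin 2) ℚ) (MvPowerSeries (Fin 2) ℚ))
    (hA : constantCoeff A = 0) : D (fexp A) = fexp A * D A := by
  rw [fexp_eq_subst_exp hA, derivation_subst D hA, PowerSeries.derivative_exp]

theorem rescale_fexp (b : Fin 2 → ℚ) (hA : constantCoeff A = 0) :
    rescale b (fexp A) = fexp (rescale b A) := by
  have hbA : constantCoeff (rescale b A) = 0 := by
    rw [← coeff_zero_eq_constantCoeff_apply, coeff_rescale]; simp [hA]
  rw [fexp_eq_subst_exp hA, fexp_eq_subst_exp hbA, rescale_subst b hA]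

theorem fexp_mul_fexp_neg (hA : constantCoeff A = 0) : fexp A * fexp (-A) = 1 := by
  refine pderiv.ext (R := ℚ) (fun i => ?_) (by simp [constantCoeff_fexp])
  have hA' : constantCoeff (-A) = 0 := by simp [hA]
  simp only [Derivation.leibniz, derivation_fexp _ hA, derivation_fexp _ hA', map_neg, smul_eq_mul,
    pderiv_one]
  ring

theorem fexp_add (hA : constantCoeff A = 0) (hB : constantCoeff B = 0) :
    fexp (A + B) = fexp A * fexp B := by
  have hAB : constantCoeff (A + B) = 0 := by simp [hA, hB]
  have hAB' : constantCoeff (-(A + B)) = 0 := by simp [hA, hB]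
  have mul_neg_eq_one : fexp A * fexp B * fexp (-(A + B)) = 1 := by
    refine pderiv.ext (R := ℚ) (fun i => ?_) (by simp [constantCoeff_fexp])
    simp only [Derivation.leibniz, derivation_fexp _ hA, derivation_fexp _ hB,
      derivation_fexp _ hAB', map_neg, map_add, smul_eq_mul, pderiv_one]
    ring
  linear_combination fexp A * fexp B * fexp_mul_fexp_neg hAB - fexp (A + B) * mul_neg_eq_one

theorem exists_fexp_eq_one_add_mul (hA : constantCoeff A = 0) :
    ∃ U, constantCoeff U = 1 ∧ fexp A = 1 + A * U := by
  have hs := PowerSeries.HasSubst.of_constantCoeff_zero hA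
  have exp_eq := (PowerSeries.exp ℚ).eq_X_mul_shift_add_const
  set g := PowerSeries.mk fun n => PowerSeries.coeff (n + 1) (PowerSeries.exp ℚ)
  refine ⟨g.subst A, ?_, ?_⟩
  · simp [constantCoeff_subst_of_constantCoeff_eq_zero hA, g]
  · rw [fexp_eq_subst_exp hA, exp_eq, PowerSeries.subst_add hs, PowerSeries.subst_mul hs,
      PowerSeries.subst_X hs, PowerSeries.subst_C, PowerSeries.constantCoeff_exp, map_one, add_comm]

theorem exists_fexp_sub_fexp_eq_mul (hA : constantCoeff A = 0) (hB : constantCoeff B = 0) :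
    ∃ U, constantCoeff U = 1 ∧ fexp A - fexp B = U * (A - B) := by
  obtain ⟨U, hU, hexp⟩ := exists_fexp_eq_one_add_mul (A := A - B) (by simp [hA, hB])
  refine ⟨fexp B * U, by simp [hU, constantCoeff_fexp], ?_⟩
  have h := fexp_add hB (B := A - B) (by simp [hA, hB])
  rw [add_sub_cancel, hexp] at h
  rw [h]
  ring

end Exponential

section CoeffE

variable {R : Type*} [CommSemiring R]

/-- The coefficient of `E ^ k`, as a power series in `X`: variable `0` is `X` and variable `1` is
`E`. -/
noncomputable def coeffE (k : ℕ) : MvPowerSeries (Fin 2) R →ₗ[R] R⟦X⟧ where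
  toFun V := PowerSeries.mk fun i => coeff (Finsupp.single 0 i + Finsupp.single 1 k) V
  map_add' V W := by ext; simp
  map_smul' r V := by ext; simp

theorem coeff_coeffE (i k : ℕ) (V : MvPowerSeries (Fin 2) R) :
    PowerSeries.coeff i (coeffE k V) = coeff (Finsupp.single 0 i + Finsupp.single 1 k) V := by
  simp [coeffE]

theorem single_add_single_eq_self (d : Fin 2 →₀ ℕ) :
    Finsupp.single 0 (d 0) + Finsupp.single 1 (d 1) = d := by
  ext j
  fin_cases j <;> simp

theorem coeff_eq_coeff_coeffE (d : Fin 2 →₀ ℕ) (V : MvPowerSeries (Fin 2) R) :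
    coeff d V = PowerSeries.coeff (d 0) (coeffE (d 1) V) := by
  rw [coeff_coeffE, single_add_single_eq_self]

theorem constantCoeff_coeffE_zero (V : MvPowerSeries (Fin 2) R) :
    PowerSeries.constantCoeff (coeffE 0 V) = constantCoeff V := by
  rw [← PowerSeries.coeff_zero_eq_constantCoeff_apply, coeff_coeffE]
  simp

theorem ext_coeffE {V W : MvPowerSeries (Fin 2) R} (h : ∀ k, coeffE k V = coeffE k W) : V = W := by
  ext d
  rw [coeff_eq_coeff_coeffE, coeff_eq_coeff_coeffE, h]

theorem coeffE_C (k : ℕ) (r : R) :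
    coeffE k (C r : MvPowerSeries (Fin 2) R) = if k = 0 then PowerSeries.C r else 0 := by
  classical
  ext i
  rw [coeff_coeffE, coeff_C]
  by_cases hk : k = 0 <;> simp [hk, PowerSeries.coeff_C, Finsupp.ext_iff, Fin.forall_fin_two]

theorem coeffE_mul (k : ℕ) (V W : MvPowerSeries (Fin 2) R) :
    coeffE k (V * W) = ∑ p ∈ antidiagonal k, coeffE p.1 V * coeffE p.2 W := by
  classical
  ext i
  simp only [coeff_coeffE, coeff_mul, map_sum, PowerSeries.coeff_mul]
  rw [← Finset.sum_product']
  refine Finset.sum_nbij' (fun q => ((q.1 1, q.2 1), (q.1 0, q.2 0)))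
    (fun q => (Finsupp.single 0 q.2.1 + Finsupp.single 1 q.1.1,
      Finsupp.single 0 q.2.2 + Finsupp.single 1 q.1.2)) ?_ ?_ ?_ ?_ ?_
  · simp +contextual [Finsupp.ext_iff, Fin.forall_fin_two]
  · simp +contextual [Finsupp.ext_iff, Fin.forall_fin_two]
  · simp [single_add_single_eq_self]
  · simp
  · simp [single_add_single_eq_self]

theorem coeffE_mul_of_forall_lt {k : ℕ} {W : MvPowerSeries (Fin 2) R}
    (hW : ∀ j < k, coeffE j W = 0) (U : MvPowerSeries (Fin 2) R) :
    coeffE k (U * W) = coeffE 0 U * coeffE k W := by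
  rw [coeffE_mul, Finset.sum_eq_single (0, k)]
  · rintro ⟨i, j⟩ hij hne
    have hlt : j < k := by grind [mem_antidiagonal]
    simp [hW j hlt]
  · simp

theorem coeffE_X_zero (k : ℕ) :
    coeffE k (X 0 : MvPowerSeries (Fin 2) R) = if k = 0 then PowerSeries.X else 0 := by
  classical
  ext i
  rw [coeff_coeffE, coeff_X]
  by_cases hk : k = 0 <;> simp [hk, PowerSeries.coeff_X, Finsupp.ext_iff, Fin.forall_fin_two]

theorem coeffE_X_one (k : ℕ) :
    coeffE k (X 1 : MvPowerSeries (Fin 2) R) = if k = 1 then 1 else 0 := by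
  classical
  ext i
  rw [coeff_coeffE, coeff_X]
  by_cases hk : k = 1 <;> simp [hk, PowerSeries.coeff_one, Finsupp.ext_iff, Fin.forall_fin_two]

theorem coeffE_X_zero_mul (k : ℕ) (V : MvPowerSeries (Fin 2) R) :
    coeffE k (X 0 * V) = PowerSeries.X * coeffE k V := by
  simp [coeffE_mul, coeffE_X_zero, Finset.Nat.sum_antidiagonal_eq_sum_range_succ_mk]

theorem coeffE_zero_X_one_mul (V : MvPowerSeries (Fin 2) R) : coeffE 0 (X 1 * V) = 0 := by
  simp [coeffE_mul, coeffE_X_one]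

theorem coeffE_succ_X_one_mul (k : ℕ) (V : MvPowerSeries (Fin 2) R) :
    coeffE (k + 1) (X 1 * V) = coeffE k V := by
  simp [coeffE_mul, coeffE_X_one, Finset.Nat.sum_antidiagonal_eq_sum_range_succ_mk]

theorem coeffE_pderiv_zero (k : ℕ) (V : MvPowerSeries (Fin 2) R) :
    coeffE k (pderiv R 0 V) = d⁄dX R (coeffE k V) := by
  ext i
  rw [PowerSeries.coeff_derivative, coeff_coeffE, coeff_coeffE, coeff_pderiv, add_right_comm,
    ← Finsupp.single_add]
  simp

theorem coeffE_pderiv_one (k : ℕ) (V : MvPowerSeries (Fin 2) R) :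
    coeffE k (pderiv R 1 V) = (k + 1) • coeffE (k + 1) V := by
  ext i
  rw [map_nsmul, coeff_coeffE, coeff_coeffE, coeff_pderiv, add_assoc,
    ← Finsupp.single_add, nsmul_eq_mul, mul_comm]
  simp

end CoeffE

section Euler

variable {R : Type*} [CommSemiring R]

/-- The Euler derivation `x ∂/∂x + ε ∂/∂ε`, where `x = 1 + X` and `ε = E`. -/
noncomputable def eulerD :
    Derivation R (MvPowerSeries (Fin 2) R) (MvPowerSeries (Fin 2) R) :=
  (1 + X 0 : MvPowerSeries (Fin 2) R) • pderiv R 0 + (X 1 : MvPowerSeries (Fin 2) R) • pderiv R 1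

theorem eulerD_one_add_X_zero :
    eulerD (1 + X 0 : MvPowerSeries (Fin 2) R) = 1 + X 0 := by
  simp [eulerD]

theorem coeffE_eulerD (k : ℕ) (V : MvPowerSeries (Fin 2) R) :
    coeffE k (eulerD V) = (1 + PowerSeries.X) * d⁄dX R (coeffE k V) + k • coeffE k V := by
  have eulerD_apply : eulerD V = pderiv R 0 V + X 0 * pderiv R 0 V + X 1 * pderiv R 1 V := by
    simp [eulerD, add_mul]
  rw [eulerD_apply, map_add, map_add, coeffE_X_zero_mul, coeffE_pderiv_zero, add_mul, one_mul]
  cases k with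
  | zero => rw [coeffE_zero_X_one_mul, zero_smul]
  | succ k => rw [coeffE_succ_X_one_mul, coeffE_pderiv_one]

theorem coeff_X_mul_derivative (i : ℕ) (f : R⟦X⟧) :
    PowerSeries.coeff i (PowerSeries.X * d⁄dX R f) = i * PowerSeries.coeff i f := by
  cases i with
  | zero => simp
  | succ i =>
    rw [PowerSeries.coeff_succ_X_mul, PowerSeries.coeff_derivative, mul_comm, Nat.cast_succ]

theorem coeff_coeffE_eulerD (i k : ℕ) (V : MvPowerSeries (Fin 2) R) :
    PowerSeries.coeff i (coeffE k (eulerD V)) =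
      (i + 1) * PowerSeries.coeff (i + 1) (coeffE k V)
        + (i + k) * PowerSeries.coeff i (coeffE k V) := by
  rw [coeffE_eulerD, add_mul, one_mul, map_add, map_add, map_nsmul, PowerSeries.coeff_derivative,
    coeff_X_mul_derivative, nsmul_eq_mul]
  ring

end Euler

section EulerSolutions

variable {K : Type*} [Field K] [CharZero K]

theorem eq_smul_inv_pow_of_derivative {f : K⟦X⟧} {k : ℕ}
    (hf : (1 + PowerSeries.X) * d⁄dX K f + k • f = 0) :
    f = PowerSeries.constantCoeff f • (1 + PowerSeries.X : K⟦X⟧)⁻¹ ^ k := by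
  have mul_inv : (1 + PowerSeries.X : K⟦X⟧) * (1 + PowerSeries.X)⁻¹ = 1 :=
    PowerSeries.mul_inv_cancel _ (by simp)
  have pow_mul_eq_C :
      (1 + PowerSeries.X) ^ k * f = PowerSeries.C (PowerSeries.constantCoeff f) := by
    refine PowerSeries.derivative.ext
      (mul_left_cancel₀ (left_ne_zero_of_mul_eq_one mul_inv) ?_) (by simp)
    rw [PowerSeries.derivative_C, mul_zero, Derivation.leibniz, PowerSeries.derivative_pow]
    rw [nsmul_eq_mul] at hf
    cases k with
    | zero => simpa using hf
    | succ k =>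
      simp only [map_add, PowerSeries.derivative_one, PowerSeries.derivative_X, smul_eq_mul,
        Nat.add_sub_cancel]
      linear_combination (1 + PowerSeries.X) ^ (k + 1) * hf
  rw [PowerSeries.smul_eq_C_mul, ← pow_mul_eq_C, mul_right_comm, ← mul_pow, mul_inv, one_pow,
    one_mul]

theorem one_add_X_mul_derivative_log (A : Type*) [CommRing A] [Algebra ℚ A] :
    (1 + PowerSeries.X) * d⁄dX A (PowerSeries.log A) = 1 := by
  rw [PowerSeries.deriv_log]
  ext n
  cases n with
  | zero => simp [add_mul]
  | succ n => simp [add_mul, PowerSeries.coeff_succ_X_mul, PowerSeries.coeff_one, pow_succ]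

theorem eq_smul_log_of_derivative {f : K⟦X⟧} {a : K}
    (hf : (1 + PowerSeries.X) * d⁄dX K f = PowerSeries.C a)
    (hf0 : PowerSeries.constantCoeff f = 0) : f = a • PowerSeries.log K := by
  have one_add_X_ne_zero : (1 + PowerSeries.X : K⟦X⟧) ≠ 0 :=
    left_ne_zero_of_mul_eq_one (one_add_X_mul_derivative_log K)
  refine PowerSeries.derivative.ext (mul_left_cancel₀ one_add_X_ne_zero ?_) ?_
  · rw [hf, Derivation.map_smul, mul_smul_comm, one_add_X_mul_derivative_log,
      PowerSeries.smul_eq_C_mul, mul_one]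
  · simp [hf0]

theorem logOneAdd_eq_log : logOneAdd = PowerSeries.log ℚ := by
  ext i
  simp [logOneAdd]

end EulerSolutions

section Shift

variable (c : ℚ) (V W : MvPowerSeries (Fin 2) ℚ)

theorem coeff_coeffE_shiftS (i k : ℕ) :
    PowerSeries.coeff i (coeffE k (shiftS c V)) = ∑ t ∈ Finset.range (k + 1),
      ((i + t).choose t : ℚ) * c ^ t * PowerSeries.coeff (i + t) (coeffE (k - t) V) := by
  simp [coeff_coeffE, coeff_apply, shiftS]

theorem shiftS_sub : shiftS c (V - W) = shiftS c V - shiftS c W := by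
  refine ext_coeffE fun k => ?_
  ext i
  simp only [map_sub, coeff_coeffE_shiftS, mul_sub, Finset.sum_sub_distrib]

theorem coeffE_shiftS_of_forall_lt {k : ℕ} (hW : ∀ j < k, coeffE j W = 0) :
    coeffE k (shiftS c W) = coeffE k W := by
  ext i
  rw [coeff_coeffE_shiftS, Finset.sum_eq_single 0]
  · simp
  · intro t ht ht0
    have hlt : k - t < k := by grind
    simp [hW _ hlt]
  · simp

theorem constantCoeff_shiftS : constantCoeff (shiftS c V) = constantCoeff V := by
  rw [← constantCoeff_coeffE_zero, ← constantCoeff_coeffE_zero, coeffE_shiftS_of_forall_lt]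
  simp

theorem shiftS_C (r : ℚ) : shiftS c (C r) = C r := by
  refine ext_coeffE fun k => ?_
  ext i
  rw [coeff_coeffE_shiftS, Finset.sum_eq_single 0]
  · simp
  · intro t _ ht0
    rw [coeffE_C]
    split_ifs <;> simp [PowerSeries.coeff_C, ht0]
  · simp

theorem eulerD_shiftS : eulerD (shiftS c V) = shiftS c (eulerD V) := by
  refine ext_coeffE fun k => ?_
  ext i
  simp only [coeff_coeffE_eulerD, coeff_coeffE_shiftS, Finset.mul_sum, ← Finset.sum_add_distrib]
  refine Finset.sum_congr rfl fun t ht => ?_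
  have htk : t ≤ k := Nat.lt_succ_iff.mp (Finset.mem_range.mp ht)
  have choose_succ : ((i + 1 + t).choose t : ℚ) * (i + 1) = (i + t).choose t * (i + t + 1) := by
    have h := Nat.choose_mul_succ_eq (i + t) t
    rw [show i + t + 1 - t = i + 1 by omega] at h
    rw [add_right_comm]
    exact_mod_cast h.symm
  rw [add_right_comm i 1 t] at choose_succ ⊢
  push_cast [Nat.cast_sub htk]
  linear_combination
    c ^ t * PowerSeries.coeff (i + t + 1) (coeffE (k - t) V) * choose_succ

end Shift

section Equation

variable {ι κ : Type*} [Fintype κ] {s : Finset ι} {c : ι → κ → ℚ} {V W : MvPowerSeries (Fin 2) ℚ}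

theorem constantCoeff_sum_shiftS (c : κ → ℚ) (hV : constantCoeff V = 0) :
    constantCoeff (∑ j, shiftS (c j) V) = 0 := by
  simp [constantCoeff_shiftS, hV]

/-- Modulo `E ^ (k + 1)` a series divisible by `E ^ k` is fixed by every shift, so the lowest
coefficient in `E` of the left-hand side is that of `(∑ i ∈ s, u i) * card κ • W`. -/
theorem eq_zero_of_sum_mul_sum_shiftS_eq_zero [Nonempty κ] {u : ι → MvPowerSeries (Fin 2) ℚ}
    (hu : ∑ i ∈ s, constantCoeff (u i) ≠ 0)
    (hW : ∑ i ∈ s, u i * ∑ j, shiftS (c i j) W = 0) : W = 0 := by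
  refine ext_coeffE fun k => ?_
  rw [map_zero]
  induction k using Nat.strong_induction_on with
  | _ k ih =>
    have coeffE_sum_shiftS (l : ℕ) (hl : l ≤ k) (i : ι) :
        coeffE l (∑ j, shiftS (c i j) W) = (Fintype.card κ : ℚ) • coeffE l W := by
      rw [map_sum, Finset.sum_congr rfl fun j _ =>
        coeffE_shiftS_of_forall_lt (c i j) W fun l' hl' => ih l' (hl'.trans_le hl)]
      simp [Nat.cast_smul_eq_nsmul]
    have coeffE_term (i : ι) : coeffE k (u i * ∑ j, shiftS (c i j) W) =
        coeffE 0 (u i) * (Fintype.card κ : ℚ) • coeffE k W := by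
      rw [coeffE_mul_of_forall_lt _ (u i), coeffE_sum_shiftS k le_rfl]
      intro l hl
      rw [coeffE_sum_shiftS l hl.le, ih l hl, smul_zero]
    have sum_coeffE_ne_zero : ∑ i ∈ s, coeffE 0 (u i) ≠ 0 := fun h =>
      hu (by simpa [constantCoeff_coeffE_zero] using congrArg PowerSeries.constantCoeff h)
    have h := congrArg (coeffE k) hW
    rw [map_sum, Finset.sum_congr rfl fun i _ => coeffE_term i, ← Finset.sum_mul, map_zero] at h
    simpa [sum_coeffE_ne_zero, Fintype.card_ne_zero] using h

/-- The left-hand side `∑_{i ∈ s} exp (∑_j S_{c i j} V)` of the difference equation, for an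
arbitrary finite family of shift vectors `c i`. -/
noncomputable def shiftExpSum (s : Finset ι) (c : ι → κ → ℚ) (V : MvPowerSeries (Fin 2) ℚ) :
    MvPowerSeries (Fin 2) ℚ :=
  ∑ i ∈ s, fexp (∑ j, shiftS (c i j) V)

theorem shiftExpSum_injective [Nonempty κ] (hs : s.Nonempty) (hV0 : constantCoeff V = 0)
    (hW0 : constantCoeff W = 0) (h : shiftExpSum s c V = shiftExpSum s c W) : V = W := by
  choose u hu hsub using fun i => exists_fexp_sub_fexp_eq_mul
    (constantCoeff_sum_shiftS (c i) hV0) (constantCoeff_sum_shiftS (c i) hW0)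
  refine sub_eq_zero.mp (eq_zero_of_sum_mul_sum_shiftS_eq_zero (s := s) (c := c) (u := u) ?_ ?_)
  · simp [hu, hs.ne_empty]
  · calc ∑ i ∈ s, u i * ∑ j, shiftS (c i j) (V - W)
        = shiftExpSum s c V - shiftExpSum s c W := by
          simp only [shiftExpSum, shiftS_sub, Finset.sum_sub_distrib, ← hsub]
      _ = 0 := sub_eq_zero.mpr h

theorem eulerD_shiftExpSum (hV0 : constantCoeff V = 0) :
    eulerD (shiftExpSum s c V) =
      ∑ i ∈ s, fexp (∑ j, shiftS (c i j) V) * ∑ j, shiftS (c i j) (eulerD V) := by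
  simp only [shiftExpSum, map_sum, derivation_fexp _ (constantCoeff_sum_shiftS _ hV0),
    eulerD_shiftS]

theorem eulerD_eq_C_of_eulerD_shiftExpSum [Nonempty κ] (hs : s.Nonempty)
    (hV0 : constantCoeff V = 0) (h : eulerD (shiftExpSum s c V) = shiftExpSum s c V) :
    eulerD V = C (Fintype.card κ : ℚ)⁻¹ := by
  have sum_shiftS_C (i : ι) : ∑ j, shiftS (c i j) (C (Fintype.card κ : ℚ)⁻¹) = 1 := by
    simp only [shiftS_C, Finset.sum_const, Finset.card_univ, ← map_nsmul]
    simp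
  refine sub_eq_zero.mp (eq_zero_of_sum_mul_sum_shiftS_eq_zero (s := s) (c := c)
    (u := fun i => fexp (∑ j, shiftS (c i j) V)) ?_ ?_)
  · simp [constantCoeff_fexp, hs.ne_empty]
  · simp only [shiftS_sub, Finset.sum_sub_distrib, sum_shiftS_C, mul_sub, mul_one]
    rw [← eulerD_shiftExpSum hV0, h, shiftExpSum, sub_self]

end Equation

section Parity

variable {ι κ : Type*} [Fintype κ] {s : Finset ι} {c : ι → κ → ℚ} {V : MvPowerSeries (Fin 2) ℚ}

/-- The substitution `E ↦ -E`, whose fixed points are the series even in `E`. -/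
noncomputable def negE : MvPowerSeries (Fin 2) ℚ →+* MvPowerSeries (Fin 2) ℚ :=
  rescale ![1, -1]

theorem coeffE_negE (k : ℕ) (V : MvPowerSeries (Fin 2) ℚ) :
    coeffE k (negE V) = (-1 : ℚ) ^ k • coeffE k V := by
  ext i
  rw [map_smul, coeff_coeffE, coeff_coeffE, negE, coeff_rescale,
    Finsupp.prod_fintype _ _ fun _ => pow_zero _]
  simp

theorem constantCoeff_negE (V : MvPowerSeries (Fin 2) ℚ) :
    constantCoeff (negE V) = constantCoeff V := by
  rw [← constantCoeff_coeffE_zero, coeffE_negE, pow_zero, one_smul, constantCoeff_coeffE_zero]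

theorem negE_smul_one_add_X_zero (a : ℚ) :
    negE (a • (1 + X 0)) = a • (1 + X 0) := by
  refine ext_coeffE fun k => ?_
  rw [coeffE_negE]
  cases k with
  | zero => rw [pow_zero, one_smul]
  | succ k =>
    have coeffE_one : coeffE (k + 1) (1 : MvPowerSeries (Fin 2) ℚ) = 0 := by
      simpa using coeffE_C (k + 1) (1 : ℚ)
    simp [coeffE_one, coeffE_X_zero]

theorem coeffE_eq_zero_of_negE_eq_self (hV : negE V = V) {k : ℕ} (hk : Odd k) :
    coeffE k V = 0 := by
  ext i
  have h := congrArg (PowerSeries.coeff i) (coeffE_negE k V)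
  rwa [hV, hk.neg_one_pow, neg_one_smul, map_neg, self_eq_neg] at h

theorem negE_shiftS (c : ℚ) (V : MvPowerSeries (Fin 2) ℚ) :
    negE (shiftS c V) = shiftS (-c) (negE V) := by
  refine ext_coeffE fun k => ?_
  ext i
  simp only [coeffE_negE, map_smul, coeff_coeffE_shiftS, smul_eq_mul, Finset.mul_sum]
  refine Finset.sum_congr rfl fun t ht => ?_
  have neg_one_pow_eq : (-1 : ℚ) ^ k = (-1) ^ t * (-1) ^ (k - t) := by
    rw [← pow_add, Nat.add_sub_cancel' (Nat.lt_succ_iff.mp (Finset.mem_range.mp ht))]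
  rw [neg_one_pow_eq, neg_pow c]
  ring

theorem negE_shiftExpSum (hV0 : constantCoeff V = 0) :
    negE (shiftExpSum s c V) = shiftExpSum s (-c) (negE V) := by
  have negE_fexp (A : MvPowerSeries (Fin 2) ℚ) (hA : constantCoeff A = 0) :
      negE (fexp A) = fexp (negE A) := rescale_fexp _ hA
  simp only [shiftExpSum, map_sum, negE_fexp _ (constantCoeff_sum_shiftS _ hV0), negE_shiftS,
    Pi.neg_apply]

theorem shiftExpSum_neg_of_involutive {σ : ι → ι} (hσ : σ.Involutive) (hσs : ∀ i ∈ s, σ i ∈ s)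
    (τ : Equiv.Perm κ) (hc : ∀ i j, c (σ i) (τ j) = -c i j) :
    shiftExpSum s (-c) = shiftExpSum s c := by
  funext V
  refine Finset.sum_nbij' σ σ hσs hσs (fun i _ => hσ i) (fun i _ => hσ i) fun i _ => ?_
  congr 1
  exact Fintype.sum_equiv τ _ _ fun j => by rw [hc, Pi.neg_apply, Pi.neg_apply]

end Parity

section Solution

variable {ι κ : Type*} [Fintype κ] [Nonempty κ] {s : Finset ι} {c : ι → κ → ℚ} {a : ℚ}
  {V : MvPowerSeries (Fin 2) ℚ}

theorem eulerD_eq_C_of_shiftExpSum_eq (hs : s.Nonempty) (hV0 : constantCoeff V = 0)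
    (hV : shiftExpSum s c V = a • (1 + X 0)) : eulerD V = C (Fintype.card κ : ℚ)⁻¹ :=
  eulerD_eq_C_of_eulerD_shiftExpSum hs hV0 <| by
    rw [hV, Derivation.map_smul, eulerD_one_add_X_zero]

theorem coeffE_zero_of_shiftExpSum_eq (hs : s.Nonempty) (hV0 : constantCoeff V = 0)
    (hV : shiftExpSum s c V = a • (1 + X 0)) :
    coeffE 0 V = (Fintype.card κ : ℚ)⁻¹ • PowerSeries.log ℚ := by
  refine eq_smul_log_of_derivative ?_ (by rw [constantCoeff_coeffE_zero, hV0])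
  have h := congrArg (coeffE 0) (eulerD_eq_C_of_shiftExpSum_eq hs hV0 hV)
  rwa [coeffE_eulerD, zero_smul, add_zero, coeffE_C, if_pos rfl] at h

theorem exists_coeffE_of_shiftExpSum_eq (hs : s.Nonempty) (hV0 : constantCoeff V = 0)
    (hV : shiftExpSum s c V = a • (1 + X 0)) {k : ℕ} (hk : k ≠ 0) :
    ∃ P : ℚ, coeffE k V = P • (1 + PowerSeries.X : ℚ⟦X⟧)⁻¹ ^ k := by
  refine ⟨_, eq_smul_inv_pow_of_derivative ?_⟩
  rw [← coeffE_eulerD, eulerD_eq_C_of_shiftExpSum_eq hs hV0 hV, coeffE_C, if_neg hk]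

theorem negE_eq_self_of_shiftExpSum_eq (hs : s.Nonempty)
    (hc : shiftExpSum s (-c) = shiftExpSum s c) (hV0 : constantCoeff V = 0)
    (hV : shiftExpSum s c V = a • (1 + X 0)) : negE V = V := by
  refine shiftExpSum_injective (c := c) hs (by rw [constantCoeff_negE, hV0]) hV0 ?_
  rw [← hc, ← negE_shiftExpSum hV0, hc, hV, negE_smul_one_add_X_zero]

theorem gap_form_of_solution_general (hs : s.Nonempty)
    (hc : shiftExpSum s (-c) = shiftExpSum s c) (hV0 : constantCoeff V = 0)
    (hV : shiftExpSum s c V = a • (1 + X 0)) :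
    (∀ i g : ℕ, coeff (Finsupp.single 0 i + Finsupp.single 1 (2 * g + 1)) V = 0) ∧
    (∀ i : ℕ, coeff (Finsupp.single 0 i) V
        = (Fintype.card κ : ℚ)⁻¹ * PowerSeries.coeff i logOneAdd) ∧
    (∀ g : ℕ, 1 ≤ g → ∃ P : ℚ, ∀ i : ℕ,
      coeff (Finsupp.single 0 i + Finsupp.single 1 (2 * g)) V
        = P * PowerSeries.coeff i ((1 + PowerSeries.X : ℚ⟦X⟧)⁻¹ ^ (2 * g))) := by
  refine ⟨fun i g => ?_, fun i => ?_, fun g hg => ?_⟩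
  · rw [← coeff_coeffE, coeffE_eq_zero_of_negE_eq_self
      (negE_eq_self_of_shiftExpSum_eq hs hc hV0 hV) (odd_two_mul_add_one g), map_zero]
  · rw [logOneAdd_eq_log, ← smul_eq_mul, ← PowerSeries.coeff_smul,
      ← coeffE_zero_of_shiftExpSum_eq hs hV0 hV, coeff_coeffE, Finsupp.single_zero, add_zero]
  · obtain ⟨P, hP⟩ := exists_coeffE_of_shiftExpSum_eq hs hV0 hV (k := 2 * g) (by omega)
    exact ⟨P, fun i => by rw [← coeff_coeffE, hP, PowerSeries.coeff_smul, smul_eq_mul]⟩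

end Solution

section MonotoneTuples

variable {m n : ℕ}

/-- The index set `0 ≤ α₁ ≤ ⋯ ≤ α_m ≤ n` of the difference equation. -/
def monotoneTuples (m n : ℕ) : Finset (Fin m → Fin (n + 1)) :=
  Finset.univ.filter fun α => ∀ i j : Fin m, i ≤ j → α i ≤ α j

/-- The shifts `α_j m - (j - 1/2) n`, `1 ≤ j ≤ m`, of the difference equation; `Fin m` starts at
`0`, whence the sign of `1/2`. -/
def shiftVector (m n : ℕ) (α : Fin m → Fin (n + 1)) (j : Fin m) : ℚ :=
  (α j : ℚ) * m - (((j : ℕ) : ℚ) + 1 / 2) * n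

/-- The involution `α_j ↦ n - α_{m + 1 - j}`, under which the shifts change sign. -/
def revTuple (α : Fin m → Fin (n + 1)) : Fin m → Fin (n + 1) :=
  fun j => (α j.rev).rev

theorem revTuple_involutive : Function.Involutive (revTuple (m := m) (n := n)) :=
  fun α => funext fun j => by simp [revTuple]

theorem revTuple_mem_monotoneTuples {α : Fin m → Fin (n + 1)} (hα : α ∈ monotoneTuples m n) :
    revTuple α ∈ monotoneTuples m n := by
  simp only [monotoneTuples, Finset.mem_filter, Finset.mem_univ, true_and] at hα ⊢
  exact fun i j hij => Fin.rev_le_rev.mpr (hα _ _ (Fin.rev_le_rev.mpr hij))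

theorem shiftVector_revTuple (α : Fin m → Fin (n + 1)) (j : Fin m) :
    shiftVector m n (revTuple α) j.rev = -shiftVector m n α j := by
  have hα : (((α j).rev : ℕ) : ℚ) = n - α j := by
    rw [Fin.val_rev, Nat.add_sub_add_right, Nat.cast_sub (Fin.is_le _)]
  have hj : ((j.rev : ℕ) : ℚ) = m - (j + 1) := by
    rw [Fin.val_rev, Nat.cast_sub j.isLt, Nat.cast_succ]
  rw [shiftVector, shiftVector, revTuple, Fin.rev_rev, hα, hj]
  ring

theorem monotoneTuples_nonempty (m n : ℕ) : (monotoneTuples m n).Nonempty :=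
  ⟨0, by simp [monotoneTuples]⟩

theorem shiftExpSum_neg_shiftVector (m n : ℕ) :
    shiftExpSum (monotoneTuples m n) (-shiftVector m n) =
      shiftExpSum (monotoneTuples m n) (shiftVector m n) :=
  shiftExpSum_neg_of_involutive revTuple_involutive (fun _ => revTuple_mem_monotoneTuples)
    Fin.revPerm shiftVector_revTuple

theorem shiftExpSum_eq_of_diffEq {V : MvPowerSeries (Fin 2) ℚ} (hV : diffEq m n V) :
    shiftExpSum (monotoneTuples m n) (shiftVector m n) V =
      ((m + n).choose m : ℚ) • (1 + X 0) := by
  rw [Nat.cast_smul_eq_nsmul, nsmul_eq_mul]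
  exact hV

end MonotoneTuples

/-- The unique zero-constant-term solution `V` of the difference equation satisfies:
(i) `V` contains only even powers of `E`;
(ii) the specialization of `V` at `E = 0` equals `(1/m)·log(1+X)`;
(iii) for every `g ≥ 1` the coefficient of `E^{2g}` in `V` equals `P_g·(1+X)^{-2g}`
for some rational number `P_g`. -/
theorem gap_form_of_solution (m n : ℕ) (hm : 0 < m) (hn : 0 < n) (hmn : Nat.Coprime m n)
    (V : MvPowerSeries (Fin 2) ℚ)
    (hV0 : MvPowerSeries.constantCoeff V = 0) (hVeq : diffEq m n V) :
    (∀ i g : ℕ, MvPowerSeries.coeff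
        (Finsupp.single 0 i + Finsupp.single 1 (2 * g + 1)) V = 0) ∧
    (∀ i : ℕ, MvPowerSeries.coeff (Finsupp.single 0 i) V
        = ((m : ℚ))⁻¹ * PowerSeries.coeff i logOneAdd) ∧
    (∀ g : ℕ, 1 ≤ g → ∃ P : ℚ, ∀ i : ℕ,
      MvPowerSeries.coeff (Finsupp.single 0 i + Finsupp.single 1 (2 * g)) V
        = P * PowerSeries.coeff i (((1 + PowerSeries.X : PowerSeries ℚ))⁻¹ ^ (2 * g))) := by
  have : Nonempty (Fin m) := ⟨⟨0, hm⟩⟩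
  simpa only [Fintype.card_fin] using gap_form_of_solution_general (monotoneTuples_nonempty m n)
    (shiftExpSum_neg_shiftVector m n) hV0 (shiftExpSum_eq_of_diffEq hVeq)
end

section
/- For every $g\ge1$ there exist a polynomial $Q_g\in\mathbb{Q}[s,t]$ and a nonnegative integer $d_g$ such that for every pair $(m,n)$ of coprime positive integers, the gap coefficient satisfies $P_g(m,n)=Q_g(m,n)/m^{d_g}$; in other words, $P_g(m,n)$ is given by an element of $\mathbb{Q}[m,n,m^{-1}]$ evaluated at $(m,n)$, uniformly in $(m,n)$. -/
open MvPowerSeries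

open scoped BigOperators

/-!
Divided by `C(m+n, m)`, the difference equation says that the average of
`exp (∑ⱼ S_{cⱼ} V)`, with `cⱼ = βⱼ m - (j + 1/2) n`, over all weakly increasing sequences
`β₀ ≤ ⋯ ≤ βₘ₋₁ ≤ n` is `1 + X`.

Averages of products of additive statistics `∑ⱼ f(j, βⱼ)`, `f` polynomial, are polynomials in `m`
and `n`: splitting off the last entry `k` of `β` gives a recursion of the form
`∑_{k ≤ n} C(m+k, m) (A(m, k) + G(m, k)) = C(m+1+n, m+1) A(m+1, n)` with `G` known by induction on
the number of factors, and in the basis of products of falling factorials a hockey stick identity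
solves it by a polynomial `A`.

The coefficients of `V` are then found one at a time, by total degree and, within a total degree, by
the degree in `E`. In the equation for the coefficient at `d`, the coefficient of `V` at `d`
occurs as `m · coeff d V`, and all other terms are polynomial in power sums of the `cⱼ` and earlier
coefficients. Hence only powers of `m` enter the denominators.
-/

/-! ### Falling factorials and the hockey stick recursion -/

open Polynomial in
theorem span_range_descPochhammer (R : Type*) [Ring R] [NoZeroDivisors R] [Nontrivial R] :
    Submodule.span R (Set.range (descPochhammer R)) = ⊤ := by
  let S : Polynomial.Sequence R :=
    ⟨descPochhammer R, fun i => by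
      rw [degree_eq_natDegree (monic_descPochhammer R i).ne_zero, descPochhammer_natDegree]⟩
  exact S.span fun i => (monic_descPochhammer R i).leadingCoeff ▸ isUnit_one

open Polynomial in
theorem adjoin_pair_eq_span_descPochhammer {R A : Type*} [CommRing R] [IsDomain R] [CommRing A]
    [Algebra R A] (x y : A) :
    (Algebra.adjoin R {x, y}).toSubmodule = Submodule.span R (Set.range fun p : ℕ × ℕ =>
      aeval x (descPochhammer R p.1) * aeval y (descPochhammer R p.2)) := by
  apply le_antisymm
  · have pow_mem (z : A) (k : ℕ) :
        z ^ k ∈ Submodule.span R (Set.range fun a => aeval z (descPochhammer R a)) := by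
      have hX : (X : R[X]) ^ k ∈ Submodule.span R (Set.range (descPochhammer R)) := by
        simp only [span_range_descPochhammer, Submodule.mem_top]
      have h := Submodule.mem_map_of_mem (f := (aeval z).toLinearMap) hX
      rw [Submodule.map_span, ← Set.range_comp] at h
      simpa [Function.comp_def] using h
    rw [Algebra.adjoin_eq_span, Submodule.span_le]
    intro w hw
    obtain ⟨k, l, rfl⟩ := (Submonoid.mem_closure_pair x y w).1 hw
    have h := Submodule.mul_mem_mul (pow_mem x k) (pow_mem y l)
    rw [Submodule.span_mul_span] at h
    refine Submodule.span_mono ?_ h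
    rintro _ ⟨_, ⟨a, rfl⟩, _, ⟨b, rfl⟩, rfl⟩
    exact ⟨(a, b), rfl⟩
  · rw [Submodule.span_le]
    rintro _ ⟨⟨a, b⟩, rfl⟩
    exact Subalgebra.mul_mem _
      (Algebra.adjoin_mono (by simp) (aeval_mem_adjoin_singleton R x))
      (Algebra.adjoin_mono (by simp) (aeval_mem_adjoin_singleton R y))

/-- The functions `(m, n) ↦ Q(m, n)` on pairs of natural numbers given by a polynomial
`Q ∈ ℚ[s, t]`. -/
noncomputable def natPolynomialFunctions : Subalgebra ℚ (ℕ → ℕ → ℚ) :=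
  Algebra.adjoin ℚ {fun (m _ : ℕ) => (m : ℚ), fun (_ n : ℕ) => (n : ℚ)}

namespace natPolynomialFunctions

theorem fst_mem : (fun (m _ : ℕ) => (m : ℚ)) ∈ natPolynomialFunctions :=
  Algebra.subset_adjoin (Set.mem_insert _ _)

theorem snd_mem : (fun (_ n : ℕ) => (n : ℚ)) ∈ natPolynomialFunctions :=
  Algebra.subset_adjoin (Set.mem_insert_of_mem _ rfl)

theorem eq_span_descFactorial :
    natPolynomialFunctions.toSubmodule = Submodule.span ℚ (Set.range fun p : ℕ × ℕ =>
      fun m n : ℕ => (m.descFactorial p.1 : ℚ) * n.descFactorial p.2) := by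
  rw [natPolynomialFunctions, adjoin_pair_eq_span_descPochhammer]
  congr!
  simp [Polynomial.aeval_pi_apply, Polynomial.coe_aeval_eq_eval,
    descPochhammer_eval_eq_descFactorial]

end natPolynomialFunctions

theorem sum_range_choose_mul_descFactorial (m n b : ℕ) :
    ∑ k ∈ Finset.range (n + 1), (m + k).choose m * ((m + 1 + b) * k.descFactorial b) =
      (m + 1 + n).choose (m + 1) * ((m + 1) * n.descFactorial b) := by
  induction n with
  | zero => cases b <;> simp
  | succ n ih =>
    have pascal : (m + 1 + (n + 1)).choose (m + 1) =
        (m + (n + 1)).choose m + (m + 1 + n).choose (m + 1) := by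
      rw [show m + 1 + (n + 1) = m + (n + 1) + 1 by ring, Nat.choose_succ_succ',
        show m + (n + 1) = m + 1 + n by ring]
    have absorb : (m + 1 + n).choose (m + 1) * (m + 1) = (m + (n + 1)).choose m * (n + 1) := by
      rw [Nat.choose_succ_right_eq, show m + 1 + n = m + (n + 1) by ring, Nat.add_sub_cancel_left]
    have step : (n + 1) * n.descFactorial b + b * (n + 1).descFactorial b =
        (n + 1) * (n + 1).descFactorial b := by
      rw [← Nat.succ_descFactorial, ← add_mul]
      rcases le_or_gt b (n + 1) with h | h
      · rw [Nat.sub_add_cancel h]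
      · simp [Nat.descFactorial_of_lt h]
    rw [Finset.sum_range_succ, ih, pascal]
    zify at absorb step ⊢
    linear_combination ((n.descFactorial b : ℤ) - (n + 1).descFactorial b) * absorb
      + ((m + (n + 1)).choose m : ℤ) * step

theorem sum_range_choose_mul_descFactorial_mul_descFactorial (a b m n : ℕ) :
    ∑ k ∈ Finset.range (n + 1), ((m + k).choose m : ℚ) *
        ((m.descFactorial (a + 1) * k.descFactorial b : ℚ)
          + (a + b + 1) * (m.descFactorial a * k.descFactorial b)) =
      (m + 1 + n).choose (m + 1) * ((m + 1).descFactorial (a + 1) * n.descFactorial b) := by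
  have desc_succ : (m.descFactorial (a + 1) : ℚ) = (m - a) * m.descFactorial a := by
    rw [Nat.descFactorial_succ]
    rcases le_or_gt a m with h | h
    · push_cast [h]; rfl
    · simp [Nat.descFactorial_of_lt h]
  have hockey_stick := congrArg (Nat.cast (R := ℚ)) (sum_range_choose_mul_descFactorial m n b)
  push_cast at hockey_stick
  calc _ = m.descFactorial a * ∑ k ∈ Finset.range (n + 1),
          ((m + k).choose m : ℚ) * ((m + 1 + b) * k.descFactorial b) := by
          rw [desc_succ, Finset.mul_sum]
          exact Finset.sum_congr rfl fun k _ => by ring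
    _ = _ := by rw [hockey_stick, Nat.succ_descFactorial_succ]; push_cast; ring

theorem exists_natPolynomialFunction_sum_choose_mul_of_zero {G : ℕ → ℕ → ℚ}
    (hG : G ∈ natPolynomialFunctions) :
    ∃ A ∈ natPolynomialFunctions, (∀ n, A 0 n = 0) ∧ ∀ m n : ℕ,
      ∑ k ∈ Finset.range (n + 1), ((m + k).choose m : ℚ) * (A m k + G m k) =
        (m + 1 + n).choose (m + 1) * A (m + 1) n := by
  rw [← Subalgebra.mem_toSubmodule, natPolynomialFunctions.eq_span_descFactorial] at hG
  induction hG using Submodule.span_induction with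
  | mem G h =>
    obtain ⟨⟨a, b⟩, rfl⟩ := h
    have hab : (a + b + 1 : ℚ) ≠ 0 := by positivity
    refine ⟨(a + b + 1 : ℚ)⁻¹ • fun m n => (m.descFactorial (a + 1) : ℚ) * n.descFactorial b,
      Submodule.smul_mem (Subalgebra.toSubmodule natPolynomialFunctions) _ ?_, ?_, fun m n => ?_⟩
    · rw [natPolynomialFunctions.eq_span_descFactorial]
      exact Submodule.subset_span ⟨(a + 1, b), rfl⟩
    · simp
    · simp only [Pi.smul_apply, smul_eq_mul]
      rw [mul_left_comm, ← sum_range_choose_mul_descFactorial_mul_descFactorial, Finset.mul_sum]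
      exact Finset.sum_congr rfl fun k _ => by field_simp
  | zero => exact ⟨0, zero_mem _, by simp, by simp⟩
  | add G H _ _ ihG ihH =>
    obtain ⟨A, hA, hA0, hAG⟩ := ihG
    obtain ⟨B, hB, hB0, hBH⟩ := ihH
    refine ⟨A + B, add_mem hA hB, by simp [hA0, hB0], fun m n => ?_⟩
    simp only [Pi.add_apply, mul_add ((Nat.choose _ _ : ℕ) : ℚ) (A _ _) (B _ _), ← hAG, ← hBH,
      ← Finset.sum_add_distrib]
    exact Finset.sum_congr rfl fun k _ => by ring
  | smul c G _ ih =>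
    obtain ⟨A, hA, hA0, hAG⟩ := ih
    refine ⟨c • A, Subalgebra.smul_mem _ hA c, by simp [hA0], fun m n => ?_⟩
    simp only [Pi.smul_apply, ← smul_add, mul_smul_comm, ← Finset.smul_sum, hAG]

theorem exists_natPolynomialFunction_sum_choose_mul {G : ℕ → ℕ → ℚ}
    (hG : G ∈ natPolynomialFunctions) (c : ℚ) :
    ∃ A ∈ natPolynomialFunctions, (∀ n, A 0 n = c) ∧ ∀ m n : ℕ,
      ∑ k ∈ Finset.range (n + 1), ((m + k).choose m : ℚ) * (A m k + G m k) =
        (m + 1 + n).choose (m + 1) * A (m + 1) n := by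
  obtain ⟨A, hA, hA0, hAG⟩ := exists_natPolynomialFunction_sum_choose_mul_of_zero hG
  refine ⟨A + algebraMap ℚ _ c, add_mem hA (algebraMap_mem _ c), by simp [hA0], fun m n => ?_⟩
  have hockey_stick :
      ∑ k ∈ Finset.range (n + 1), ((m + k).choose m : ℚ) = (m + 1 + n).choose (m + 1) := by
    rw [show m + 1 + n = n + m + 1 by ring, ← Nat.sum_range_add_choose]
    simp only [Nat.cast_sum, Nat.add_comm]
  simp only [Pi.add_apply, Pi.algebraMap_apply, Algebra.algebraMap_self, RingHom.id_apply]
  rw [mul_add, ← hAG, ← hockey_stick, Finset.sum_mul, ← Finset.sum_add_distrib]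
  exact Finset.sum_congr rfl fun k _ => by ring

/-! ### Averages over weakly increasing sequences -/

theorem monotone_snoc_iff {α : Type*} [Preorder α] {m : ℕ} {β : Fin m → α} {a : α} :
    Monotone (Fin.snoc (α := fun _ => α) β a) ↔ Monotone β ∧ ∀ i, β i ≤ a := by
  simp only [Monotone, Fin.forall_fin_succ', Fin.snoc_castSucc, Fin.snoc_last, le_refl,
    Fin.castSucc_le_castSucc_iff, Fin.le_last, forall_true_left, and_true]
  have last_not_le (i : Fin m) : ¬ Fin.last m ≤ i.castSucc := (Fin.castSucc_lt_last i).not_ge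
  simp [last_not_le, forall_and]

/-- The weakly increasing sequences `β₀ ≤ ⋯ ≤ βₘ₋₁ ≤ n` of natural numbers. They are encoded as
`ℕ`-valued functions, so that the bound `n` can vary without changing the type. -/
def monotoneSeqs (m n : ℕ) : Finset (Fin m → ℕ) :=
  {β ∈ Fintype.piFinset fun _ => Finset.range (n + 1) | ∀ i j, i ≤ j → β i ≤ β j}

theorem mem_monotoneSeqs {m n : ℕ} {β : Fin m → ℕ} :
    β ∈ monotoneSeqs m n ↔ Monotone β ∧ ∀ i, β i ≤ n := by
  simp [monotoneSeqs, Monotone, and_comm]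

theorem snoc_mem_monotoneSeqs {m n k : ℕ} {β : Fin m → ℕ} :
    Fin.snoc (α := fun _ => ℕ) β k ∈ monotoneSeqs (m + 1) n ↔ β ∈ monotoneSeqs m k ∧ k ≤ n := by
  simp only [mem_monotoneSeqs, monotone_snoc_iff, Fin.forall_fin_succ', Fin.snoc_castSucc,
    Fin.snoc_last]
  exact ⟨fun h => ⟨h.1, h.2.2⟩, fun h => ⟨h.1, fun i => (h.1.2 i).trans h.2, h.2⟩⟩

theorem sum_monotoneSeqs_succ {M : Type*} [AddCommMonoid M] (m n : ℕ)
    (F : (Fin (m + 1) → ℕ) → M) :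
    ∑ β ∈ monotoneSeqs (m + 1) n, F β =
      ∑ k ∈ Finset.range (n + 1), ∑ β ∈ monotoneSeqs m k, F (Fin.snoc (α := fun _ => ℕ) β k) := by
  rw [Finset.sum_sigma']
  refine Finset.sum_nbij' (fun β => ⟨β (Fin.last m), Fin.init β⟩)
    (fun p => Fin.snoc (α := fun _ => ℕ) p.2 p.1) ?_ ?_ ?_ ?_ ?_
  · intro β hβ
    rw [← Fin.snoc_init_self β, snoc_mem_monotoneSeqs] at hβ
    simpa [Nat.lt_succ_iff] using hβ.symm
  · rintro ⟨k, β⟩ h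
    rw [Finset.mem_sigma, Finset.mem_range, Nat.lt_succ_iff] at h
    exact snoc_mem_monotoneSeqs.2 h.symm
  all_goals simp

theorem monotoneSeqs_zero (n : ℕ) : monotoneSeqs 0 n = {Fin.elim0} := by
  ext β
  simpa [mem_monotoneSeqs, Subsingleton.monotone] using Subsingleton.elim _ _

theorem card_monotoneSeqs (m n : ℕ) : (monotoneSeqs m n).card = (m + n).choose m := by
  induction m generalizing n with
  | zero => simp [monotoneSeqs_zero]
  | succ m ih =>
    rw [Finset.card_eq_sum_ones, sum_monotoneSeqs_succ]
    simp only [← Finset.card_eq_sum_ones, ih, Nat.add_comm m, Nat.sum_range_add_choose]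
    congr 1
    ring

theorem monotoneSeqs_nonempty (m n : ℕ) : (monotoneSeqs m n).Nonempty := by
  rw [← Finset.card_pos, card_monotoneSeqs]
  exact Nat.choose_pos (Nat.le_add_right m n)

theorem sum_filter_monotone_fin {M : Type*} [AddCommMonoid M] (m n : ℕ) (F : (Fin m → ℕ) → M) :
    ∑ α ∈ Finset.univ.filter (fun α : Fin m → Fin (n + 1) => ∀ i j, i ≤ j → α i ≤ α j),
      F (fun j => α j) = ∑ β ∈ monotoneSeqs m n, F β := by
  refine Finset.sum_bij' (fun α _ j => (α j : ℕ))
    (fun β hβ j => ⟨β j, Nat.lt_succ_of_le ((mem_monotoneSeqs.1 hβ).2 j)⟩) ?_ ?_ ?_ ?_ ?_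
  · intro α hα
    exact mem_monotoneSeqs.2 ⟨fun i j hij => (Finset.mem_filter.1 hα).2 i j hij, fun i => by omega⟩
  · intro β hβ
    exact Finset.mem_filter.2 ⟨Finset.mem_univ _, fun i j hij => (mem_monotoneSeqs.1 hβ).1 hij⟩
  all_goals intros; rfl

theorem expect_monotoneSeqs_eq_iff {m n : ℕ} {F : (Fin m → ℕ) → ℚ} {x : ℚ} :
    𝔼 β ∈ monotoneSeqs m n, F β = x ↔ ∑ β ∈ monotoneSeqs m n, F β = (m + n).choose m * x := by
  have choose_ne_zero : ((m + n).choose m : ℚ) ≠ 0 := by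
    exact_mod_cast (Nat.choose_pos (Nat.le_add_right m n)).ne'
  rw [Finset.expect_eq_sum_div_card, card_monotoneSeqs, div_eq_iff choose_ne_zero, mul_comm]

/-- The statistic `β ↦ ∑ⱼ f(j, βⱼ)` on sequences of arbitrary length `m`. -/
def additiveStatistic (f : ℕ → ℕ → ℚ) : ∀ m, (Fin m → ℕ) → ℚ :=
  fun m β => ∑ j : Fin m, f j (β j)

theorem additiveStatistic_snoc (f : ℕ → ℕ → ℚ) {m : ℕ} (β : Fin m → ℕ) (k : ℕ) :
    additiveStatistic f (m + 1) (Fin.snoc (α := fun _ => ℕ) β k) =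
      additiveStatistic f m β + f m k := by
  simp [additiveStatistic, Fin.sum_univ_castSucc]

theorem prod_add_eq_prod_add_sum_ssubsets {ι R : Type*} [CommSemiring R] [DecidableEq ι]
    (f g : ι → R) (s : Finset ι) :
    ∏ i ∈ s, (f i + g i) =
      ∏ i ∈ s, f i + ∑ t ∈ s.ssubsets, (∏ i ∈ t, f i) * ∏ i ∈ s \ t, g i := by
  rw [Finset.prod_add, Finset.ssubsets, ← Finset.add_sum_erase _ _ (Finset.mem_powerset_self s)]
  simp

theorem exists_sum_prod_additiveStatistic {ι : Type*} (f : ι → ℕ → ℕ → ℚ)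
    (hf : ∀ i, f i ∈ natPolynomialFunctions) (s : Finset ι) :
    ∃ A ∈ natPolynomialFunctions, ∀ m n : ℕ,
      ∑ β ∈ monotoneSeqs m n, ∏ i ∈ s, additiveStatistic (f i) m β =
        (m + n).choose m * A m n := by
  classical
  induction s using Finset.strongInduction with
  | H s ih =>
    choose! A hA hAsum using ih
    have hG : ∑ t ∈ s.ssubsets, A t * ∏ i ∈ s \ t, f i ∈ natPolynomialFunctions :=
      sum_mem fun t ht => mul_mem (hA t (Finset.mem_ssubsets.1 ht)) (prod_mem fun i _ => hf i)
    -- At `m = 0` every additive statistic vanishes, so only the empty product survives.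
    obtain ⟨B, hB, hB0, hBsum⟩ := exists_natPolynomialFunction_sum_choose_mul hG (∏ _i ∈ s, 0)
    refine ⟨B, hB, fun m => ?_⟩
    induction m with
    | zero => simp [monotoneSeqs_zero, hB0, additiveStatistic]
    | succ m ihm =>
      intro n
      rw [← hBsum, sum_monotoneSeqs_succ]
      refine Finset.sum_congr rfl fun k _ => ?_
      simp only [additiveStatistic_snoc, prod_add_eq_prod_add_sum_ssubsets,
        Finset.sum_add_distrib, ihm, mul_add, Finset.sum_apply, Pi.mul_apply, Finset.prod_apply,
        Finset.mul_sum]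
      rw [Finset.sum_comm]
      congr 1
      refine Finset.sum_congr rfl fun t ht => ?_
      rw [← Finset.sum_mul, hAsum t (Finset.mem_ssubsets.1 ht), mul_assoc]

/-- The statistics of finite sequences `β` of natural numbers that are polynomial expressions in the
sums `∑ⱼ f(j, βⱼ)` with `f` polynomial. -/
noncomputable def sequenceStatistics : Subalgebra ℚ (∀ m, (Fin m → ℕ) → ℚ) :=
  Algebra.adjoin ℚ (additiveStatistic '' natPolynomialFunctions)

theorem expect_mem_natPolynomialFunctions {z : ∀ m, (Fin m → ℕ) → ℚ}
    (hz : z ∈ sequenceStatistics) :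
    (fun m n => 𝔼 β ∈ monotoneSeqs m n, z m β) ∈ natPolynomialFunctions := by
  rw [← Subalgebra.mem_toSubmodule, sequenceStatistics, Algebra.adjoin_eq_span] at hz
  induction hz using Submodule.span_induction with
  | mem z hz =>
    obtain ⟨l, hl, rfl⟩ := Submonoid.exists_list_of_mem_closure hz
    choose! f hf hfl using hl
    obtain ⟨A, hA, hAsum⟩ := exists_sum_prod_additiveStatistic (fun i : Fin l.length => f l[i])
      (fun i => hf _ (l.getElem_mem i.2)) Finset.univ
    convert hA using 3 with m n
    rw [expect_monotoneSeqs_eq_iff, ← hAsum, ← Fin.prod_univ_getElem]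
    simp [hfl]
  | zero =>
    simp only [Pi.zero_apply, Finset.expect_const_zero]
    exact zero_mem _
  | add y z _ _ hy hz =>
    simp only [Pi.add_apply, Finset.expect_add_distrib]
    exact add_mem hy hz
  | smul c z _ hz =>
    simp only [Pi.smul_apply, ← Finset.smul_expect]
    exact Subalgebra.smul_mem _ hz c

/-! ### Coefficients of powers, exponentials and shifts -/

theorem coeff_pow_mem {σ A S : Type*} [CommSemiring A] [SetLike S A] [SubsemiringClass S A] {s : S}
    {W : MvPowerSeries σ A} (hW : constantCoeff W = 0) {d : σ →₀ ℕ}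
    (h : ∀ e < d, coeff e W ∈ s) {k : ℕ} (hk : 2 ≤ k) : coeff d (W ^ k) ∈ s := by
  classical
  rw [coeff_pow]
  refine sum_mem fun l hl => ?_
  rw [Finset.mem_finsuppAntidiag] at hl
  by_cases hl0 : ∃ i ∈ Finset.range k, l i = 0
  · obtain ⟨i, hi, hli⟩ := hl0
    rw [Finset.prod_eq_zero hi (by rw [hli, coeff_zero_eq_constantCoeff_apply, hW])]
    exact zero_mem s
  · push Not at hl0
    refine prod_mem fun i hi => h _ ?_
    obtain ⟨j, hj, hji⟩ : ∃ j ∈ Finset.range k, j ≠ i :=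
      Finset.exists_mem_ne (by simpa using Nat.lt_of_succ_le hk) i
    calc l i < l i + l j := lt_add_of_pos_right _ (pos_iff_ne_zero.2 (hl0 j hj))
      _ ≤ (Finset.range k).sum l :=
        Finset.add_le_sum (fun _ _ => zero_le) hi hj hji.symm
      _ = d := hl.1

theorem coeff_fexp {V : MvPowerSeries (Fin 2) ℚ} {d : Fin 2 →₀ ℕ} (hd : d ≠ 0) :
    coeff d (fexp V) = coeff d V +
      ∑ k ∈ Finset.range (d 0 + d 1 - 1), ((k + 2).factorial : ℚ)⁻¹ * coeff d (V ^ (k + 2)) := by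
  have degree_pos : 0 < d 0 + d 1 := by
    contrapose! hd
    ext i
    fin_cases i <;> simp <;> omega
  have coeff_eq_sum : coeff d (fexp V) = ∑ k ∈ Finset.range (d 0 + d 1 - 1 + 1 + 1),
      ((k.factorial : ℚ)⁻¹ * coeff d (V ^ k)) := by
    rw [Nat.sub_add_cancel degree_pos]
    rfl
  rw [coeff_eq_sum, Finset.sum_range_succ', Finset.sum_range_succ', add_assoc, add_comm]
  simp [coeff_one, hd]

theorem coeff_shiftS (c : ℚ) (V : MvPowerSeries (Fin 2) ℚ) (d : Fin 2 →₀ ℕ) :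
    coeff d (shiftS c V) = ∑ s ∈ Finset.range (d 1 + 1), ((d 0 + s).choose s : ℚ) * c ^ s *
      coeff (Finsupp.single 0 (d 0 + s) + Finsupp.single 1 (d 1 - s)) V :=
  rfl

/-! ### Coefficients of solutions of the difference equation -/

/-- A solution `V` of the difference equation with parameters `m > 0` and `n` and with zero constant
term. The uniform dependence of the coefficients of `V` on `m` and `n` is expressed through
functions on the type of all such solutions. -/
structure GapSolution where
  m : ℕ
  n : ℕ
  V : MvPowerSeries (Fin 2) ℚ
  m_pos : 0 < m
  constantCoeff_V : constantCoeff V = 0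
  diffEq_V : diffEq m n V

namespace GapSolution

theorem m_ne_zero (t : GapSolution) : (t.m : ℚ) ≠ 0 :=
  Nat.cast_ne_zero.2 t.m_pos.ne'

/-- The functions of a solution given by an element of `ℚ[m, n, m⁻¹]`. -/
noncomputable def laurentFunctions : Subalgebra ℚ (GapSolution → ℚ) :=
  Algebra.adjoin ℚ {fun t => (t.m : ℚ), fun t => (t.n : ℚ), fun t => (t.m : ℚ)⁻¹}

theorem m_mem_laurentFunctions : (fun t : GapSolution => (t.m : ℚ)) ∈ laurentFunctions :=
  Algebra.subset_adjoin (by simp)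

theorem n_mem_laurentFunctions : (fun t : GapSolution => (t.n : ℚ)) ∈ laurentFunctions :=
  Algebra.subset_adjoin (by simp)

theorem inv_m_mem_laurentFunctions : (fun t : GapSolution => (t.m : ℚ)⁻¹) ∈ laurentFunctions :=
  Algebra.subset_adjoin (by simp)

theorem natPolynomialFunction_mem_laurentFunctions {A : ℕ → ℕ → ℚ}
    (hA : A ∈ natPolynomialFunctions) : (fun t => A t.m t.n) ∈ laurentFunctions := by
  rw [natPolynomialFunctions] at hA
  induction hA using Algebra.adjoin_induction with
  | mem A h =>
    obtain rfl | rfl := h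
    exacts [m_mem_laurentFunctions, n_mem_laurentFunctions]
  | algebraMap r => exact laurentFunctions.algebraMap_mem r
  | add A B _ _ hA hB => exact add_mem hA hB
  | mul A B _ _ hA hB => exact mul_mem hA hB

theorem exists_eval_div_pow_of_mem_laurentFunctions {f : GapSolution → ℚ}
    (hf : f ∈ laurentFunctions) :
    ∃ (Q : MvPolynomial (Fin 2) ℚ) (d : ℕ), ∀ t : GapSolution,
      f t = MvPolynomial.eval (fun i : Fin 2 => if i = 0 then (t.m : ℚ) else (t.n : ℚ)) Q
        / (t.m : ℚ) ^ d := by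
  rw [laurentFunctions] at hf
  induction hf using Algebra.adjoin_induction with
  | mem f h =>
    obtain rfl | rfl | rfl := h
    exacts [⟨.X 0, 0, by simp⟩, ⟨.X 1, 0, by simp⟩, ⟨1, 1, by simp⟩]
  | algebraMap r => exact ⟨.C r, 0, by simp⟩
  | add f g _ _ hf hg =>
    obtain ⟨Q, d, hQ⟩ := hf
    obtain ⟨R, e, hR⟩ := hg
    refine ⟨Q * .X 0 ^ e + .X 0 ^ d * R, d + e, fun t => ?_⟩
    simp [hQ, hR, div_add_div, t.m_ne_zero, pow_add]
  | mul f g _ _ hf hg =>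
    obtain ⟨Q, d, hQ⟩ := hf
    obtain ⟨R, e, hR⟩ := hg
    refine ⟨Q * R, d + e, fun t => ?_⟩
    rw [Pi.mul_apply, hQ, hR, map_mul, pow_add, div_mul_div_comm]

/-- A function of a solution, seen as a function of a solution and a sequence. -/
noncomputable def constLift :
    (GapSolution → ℚ) →ₐ[ℚ] (∀ t : GapSolution, (Fin t.m → ℕ) → ℚ) :=
  AlgHom.pi fun t => (Pi.constAlgHom ℚ _ ℚ).comp (Pi.evalAlgHom ℚ _ t)

/-- A sequence statistic, seen as a function of a solution and a sequence of length `m`. -/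
noncomputable def statisticLift :
    (∀ m, (Fin m → ℕ) → ℚ) →ₐ[ℚ] (∀ t : GapSolution, (Fin t.m → ℕ) → ℚ) :=
  AlgHom.pi fun t => Pi.evalAlgHom ℚ _ t.m

/-- The functions of a solution and a sequence of length `m` generated by Laurent polynomials in
`m`, `n` and by sequence statistics. -/
noncomputable def observables : Subalgebra ℚ (∀ t : GapSolution, (Fin t.m → ℕ) → ℚ) :=
  laurentFunctions.map constLift ⊔ sequenceStatistics.map statisticLift

theorem const_mem_observables {f : GapSolution → ℚ} (hf : f ∈ laurentFunctions) :
    (fun t _ => f t) ∈ observables :=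
  le_sup_left (a := laurentFunctions.map constLift) ⟨f, hf, rfl⟩

theorem statistic_mem_observables {z : ∀ m, (Fin m → ℕ) → ℚ} (hz : z ∈ sequenceStatistics) :
    (fun t β => z t.m β) ∈ observables :=
  le_sup_right (a := laurentFunctions.map constLift) ⟨z, hz, rfl⟩

theorem expect_mem_laurentFunctions {f : ∀ t : GapSolution, (Fin t.m → ℕ) → ℚ}
    (hf : f ∈ observables) :
    (fun t => 𝔼 β ∈ monotoneSeqs t.m t.n, f t β) ∈ laurentFunctions := by
  rw [← Subalgebra.mem_toSubmodule, observables, ← Subalgebra.mul_toSubmodule] at hf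
  induction hf using Submodule.mul_induction_on' with
  | mem_mul_mem g hg z hz =>
    obtain ⟨g, hg, rfl⟩ := hg
    obtain ⟨z, hz, rfl⟩ := hz
    change (fun t => 𝔼 β ∈ monotoneSeqs t.m t.n, g t * z t.m β) ∈ laurentFunctions
    simp only [← Finset.mul_expect]
    exact mul_mem hg
      (natPolynomialFunction_mem_laurentFunctions (expect_mem_natPolynomialFunctions hz))
  | add f _ g _ hf hg =>
    simp only [Pi.add_apply, Finset.expect_add_distrib]
    exact add_mem hf hg

/-- The amount `βⱼ m - (j + 1/2) n` by which the `j`-th factor is shifted; the index `j` starts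
from `0`. -/
def shiftAmount (t : GapSolution) (β : Fin t.m → ℕ) (j : Fin t.m) : ℚ :=
  (β j : ℚ) * t.m - (((j : ℕ) : ℚ) + 1 / 2) * t.n

theorem sum_shiftAmount_pow_mem_observables (k : ℕ) :
    (fun t β => ∑ j, t.shiftAmount β j ^ k) ∈ observables := by
  let f (s : ℕ) (j b : ℕ) : ℚ := (b : ℚ) ^ s * ((j : ℚ) + 1 / 2) ^ (k - s)
  have hf (s : ℕ) : f s ∈ natPolynomialFunctions :=
    mul_mem (pow_mem natPolynomialFunctions.snd_mem s)
      (pow_mem (add_mem natPolynomialFunctions.fst_mem (algebraMap_mem _ (1 / 2 : ℚ))) _)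
  have binomial : (fun (t : GapSolution) β => ∑ j, t.shiftAmount β j ^ k) =
      ∑ s ∈ Finset.range (k + 1), (fun t _ => (t.m : ℚ) ^ s * (-t.n : ℚ) ^ (k - s) * k.choose s) *
        fun t β => additiveStatistic (f s) t.m β := by
    funext t β
    simp only [Finset.sum_apply, Pi.mul_apply, additiveStatistic, Finset.mul_sum]
    rw [Finset.sum_comm]
    refine Finset.sum_congr rfl fun j _ => ?_
    rw [shiftAmount, sub_eq_add_neg, ← mul_neg, add_pow]
    exact Finset.sum_congr rfl fun s _ => by simp only [f, mul_pow]; ring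
  rw [binomial]
  refine sum_mem fun s _ => mul_mem (const_mem_observables ?_)
    (statistic_mem_observables (Algebra.subset_adjoin ⟨f s, hf s, rfl⟩))
  exact mul_mem (mul_mem (pow_mem m_mem_laurentFunctions s)
    (pow_mem (neg_mem n_mem_laurentFunctions) _)) (natCast_mem _ _)

/-- The argument of the exponential in the summand of the difference equation indexed by `β`. -/
noncomputable def exponent (t : GapSolution) (β : Fin t.m → ℕ) : MvPowerSeries (Fin 2) ℚ :=
  ∑ j, shiftS (t.shiftAmount β j) t.V

theorem expect_coeff_fexp_exponent (t : GapSolution) (d : Fin 2 →₀ ℕ) :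
    𝔼 β ∈ monotoneSeqs t.m t.n, coeff d (fexp (t.exponent β)) =
      coeff d (1 + X 0 : MvPowerSeries (Fin 2) ℚ) := by
  have h := congrArg (coeff d) t.diffEq_V
  rw [← nsmul_eq_mul, map_nsmul, nsmul_eq_mul, map_sum] at h
  rw [expect_monotoneSeqs_eq_iff, ← h, ← sum_filter_monotone_fin]
  rfl

theorem coeff_exponent (t : GapSolution) (β : Fin t.m → ℕ) (d : Fin 2 →₀ ℕ) :
    coeff d (t.exponent β) = t.m * coeff d t.V +
      ∑ s ∈ Finset.range (d 1), (∑ j, t.shiftAmount β j ^ (s + 1)) *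
        ((d 0 + (s + 1)).choose (s + 1) *
          coeff (Finsupp.single 0 (d 0 + (s + 1)) + Finsupp.single 1 (d 1 - (s + 1))) t.V) := by
  have hd : Finsupp.single 0 (d 0) + Finsupp.single 1 (d 1) = d := by
    ext i
    fin_cases i <;> simp
  have expand : coeff d (t.exponent β) = ∑ s ∈ Finset.range (d 1 + 1),
      (∑ j, t.shiftAmount β j ^ s) * ((d 0 + s).choose s *
        coeff (Finsupp.single 0 (d 0 + s) + Finsupp.single 1 (d 1 - s)) t.V) := by
    simp only [exponent, map_sum, coeff_shiftS, Finset.sum_mul]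
    rw [Finset.sum_comm]
    exact Finset.sum_congr rfl fun s _ => Finset.sum_congr rfl fun j _ => by ring
  rw [expand, Finset.sum_range_succ', add_comm]
  simp [hd]

theorem coeff_exponent_sub_mem_observables {d : Fin 2 →₀ ℕ}
    (h : ∀ e : Fin 2 →₀ ℕ, e 0 + e 1 = d 0 + d 1 → e 1 < d 1 →
      (fun t => coeff e t.V) ∈ laurentFunctions) :
    (fun t β => coeff d (t.exponent β) - (t.m : ℚ) * coeff d t.V) ∈ observables := by
  simp only [coeff_exponent, add_sub_cancel_left]
  have mem := sum_mem fun s (hs : s ∈ Finset.range (d 1)) =>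
    mul_mem (sum_shiftAmount_pow_mem_observables (s + 1)) (const_mem_observables
      (mul_mem (natCast_mem laurentFunctions ((d 0 + (s + 1)).choose (s + 1)))
        (h (Finsupp.single 0 (d 0 + (s + 1)) + Finsupp.single 1 (d 1 - (s + 1)))
          (by simp at hs ⊢; omega) (by simp at hs ⊢; omega))))
  convert mem using 3
  simp

theorem coeff_exponent_mem_observables {d : Fin 2 →₀ ℕ}
    (h : ∀ e : Fin 2 →₀ ℕ, e 0 + e 1 = d 0 + d 1 → (fun t => coeff e t.V) ∈ laurentFunctions) :
    (fun t β => coeff d (t.exponent β)) ∈ observables := by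
  convert add_mem (coeff_exponent_sub_mem_observables fun e he _ => h e he)
    (const_mem_observables (mul_mem m_mem_laurentFunctions (h d rfl))) using 3
  simp

theorem constantCoeff_exponent (t : GapSolution) (β : Fin t.m → ℕ) :
    constantCoeff (t.exponent β) = 0 := by
  simpa [t.constantCoeff_V] using t.coeff_exponent β 0

theorem coeff_exponent_pow_mem_observables {d : Fin 2 →₀ ℕ}
    (h : ∀ e : Fin 2 →₀ ℕ, e 0 + e 1 < d 0 + d 1 → (fun t => coeff e t.V) ∈ laurentFunctions)
    {k : ℕ} (hk : 2 ≤ k) :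
    (fun t β => coeff d (t.exponent β ^ k)) ∈ observables := by
  -- All exponents together form one power series over the ring of functions of `t` and `β`.
  let W : MvPowerSeries (Fin 2) (∀ t : GapSolution, (Fin t.m → ℕ) → ℚ) :=
    fun d t β => coeff d (t.exponent β)
  have map_W (t : GapSolution) (β : Fin t.m → ℕ) :
      W.map ((Pi.evalRingHom (fun _ => ℚ) β).comp (Pi.evalRingHom _ t)) = t.exponent β := rfl
  have coeff_W_pow : (fun t β => coeff d (t.exponent β ^ k)) = coeff d (W ^ k) := by
    funext t β
    rw [← map_W, ← map_pow, coeff_map]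
    rfl
  rw [coeff_W_pow]
  refine coeff_pow_mem (funext₂ constantCoeff_exponent) (fun e he => ?_) hk
  refine coeff_exponent_mem_observables fun e' he' => h e' ?_
  obtain ⟨hle, i, hi⟩ := Finsupp.lt_def.1 he
  have := hle 0
  have := hle 1
  fin_cases i <;> simp at hi <;> omega

theorem coeff_fexp_exponent_sub_mem_observables {d : Fin 2 →₀ ℕ} (hd : d ≠ 0)
    (h : ∀ e : Fin 2 →₀ ℕ, e 0 + e 1 < d 0 + d 1 ∨ e 0 + e 1 = d 0 + d 1 ∧ e 1 < d 1 →
      (fun t => coeff e t.V) ∈ laurentFunctions) :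
    (fun t β => coeff d (fexp (t.exponent β)) - (t.m : ℚ) * coeff d t.V) ∈ observables := by
  have linear := coeff_exponent_sub_mem_observables fun e he he1 => h e (.inr ⟨he, he1⟩)
  have higher (k : ℕ) := coeff_exponent_pow_mem_observables (fun e he => h e (.inl he))
    (Nat.le_add_left 2 k)
  convert add_mem linear (sum_mem fun k (_ : k ∈ Finset.range (d 0 + d 1 - 1)) =>
    Subalgebra.smul_mem _ (higher k) ((k + 2).factorial : ℚ)⁻¹) using 3 with t β
  rw [coeff_fexp hd]
  simp only [Pi.add_apply, Finset.sum_apply, Pi.smul_apply, smul_eq_mul]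
  ring

theorem coeff_V_mem_laurentFunctions (d : Fin 2 →₀ ℕ) :
    (fun t => coeff d t.V) ∈ laurentFunctions := by
  rcases eq_or_ne d 0 with rfl | hd
  · simp only [coeff_zero_eq_constantCoeff_apply, constantCoeff_V]
    exact zero_mem laurentFunctions
  · have rest_mem := expect_mem_laurentFunctions
      (coeff_fexp_exponent_sub_mem_observables hd fun e he => coeff_V_mem_laurentFunctions e)
    have solve (t : GapSolution) : coeff d t.V = (t.m : ℚ)⁻¹ *
        (coeff d (1 + X 0) - 𝔼 β ∈ monotoneSeqs t.m t.n,
          (coeff d (fexp (t.exponent β)) - (t.m : ℚ) * coeff d t.V)) := by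
      rw [Finset.expect_sub_distrib, expect_coeff_fexp_exponent,
        Finset.expect_const (monotoneSeqs_nonempty _ _), sub_sub_cancel,
        inv_mul_cancel_left₀ t.m_ne_zero]
    rw [funext solve]
    exact mul_mem inv_m_mem_laurentFunctions (sub_mem (algebraMap_mem laurentFunctions _) rest_mem)
termination_by (d 0 + d 1, d 1)
decreasing_by simpa [Prod.lex_def] using he

end GapSolution

theorem gap_coefficient_is_polynomial_general (d : Fin 2 →₀ ℕ) :
    ∃ (Q : MvPolynomial (Fin 2) ℚ) (e : ℕ), ∀ m n : ℕ, 0 < m →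
      ∀ V : MvPowerSeries (Fin 2) ℚ, constantCoeff V = 0 → diffEq m n V →
        coeff d V = MvPolynomial.eval (fun i : Fin 2 => if i = 0 then (m : ℚ) else (n : ℚ)) Q
          / (m : ℚ) ^ e := by
  obtain ⟨Q, e, h⟩ := GapSolution.exists_eval_div_pow_of_mem_laurentFunctions
    (GapSolution.coeff_V_mem_laurentFunctions d)
  exact ⟨Q, e, fun m n hm V h0 hV => h ⟨m, n, V, hm, h0, hV⟩⟩

/-- For every `g ≥ 1` there exist a polynomial `Q_g ∈ ℚ[s,t]` and a nonnegative integer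
`d_g` such that for every pair of coprime positive integers `(m,n)`, the gap coefficient
`P_g(m,n)` (the rational number such that the coefficient of `E^{2g}` in the unique
zero-constant-term solution `V` of the difference equation equals `P_g(m,n)·(1+X)^{-2g}`)
satisfies `P_g(m,n) = Q_g(m,n) / m^{d_g}`. -/
theorem gap_coefficient_is_polynomial (g : ℕ) (hg : 1 ≤ g) :
    ∃ (Q : MvPolynomial (Fin 2) ℚ) (dg : ℕ),
      ∀ m n : ℕ, 0 < m → 0 < n → Nat.Coprime m n →
        ∀ V : MvPowerSeries (Fin 2) ℚ,
          MvPowerSeries.constantCoeff V = 0 → diffEq m n V →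
          ∀ P : ℚ,
            (∀ i : ℕ, MvPowerSeries.coeff
                (Finsupp.single 0 i + Finsupp.single 1 (2 * g)) V
              = P * PowerSeries.coeff i
                  (((1 + PowerSeries.X : PowerSeries ℚ))⁻¹ ^ (2 * g))) →
            P = MvPolynomial.eval (fun i : Fin 2 => if i = 0 then (m : ℚ) else (n : ℚ)) Q
                  / (m : ℚ) ^ dg := by
  obtain ⟨Q, d, h⟩ :=
    gap_coefficient_is_polynomial_general (Finsupp.single 0 0 + Finsupp.single 1 (2 * g))
  refine ⟨Q, d, fun m n hm _ _ V h0 hV P hP => ?_⟩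
  rw [← h m n hm V h0 hV, hP 0]
  simp
end
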